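/- Define b_n = Σ_{k=0}^{n} C(2k,k)^2 · C(4k,2k) · C(n+3k,4k) · (-27)^{n-k} for each nonnegative integer n. Then for every nonnegative integer m, (m+2)^3 · b_{m+2} + (2m+3)(7m^2 + 21m + 17) · b_{m+1} + 81(m+1)^3 · b_m = 0. -/

import Mathlib

open Finset

/-- `b n = ∑_{k=0}^{n} C(2k,k)^2·C(4k,2k)·C(n+3k,4k)·(-27)^{n-k}`. -/
def b (n : ℕ) : ℤ :=
  ∑ k ∈ Finset.range (n + 1),
    (Nat.choose (2 * k) k : ℤ) ^ 2 * (Nat.choose (4 * k) (2 * k) : ℤ) *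
      (Nat.choose (n + 3 * k) (4 * k) : ℤ) * (-27 : ℤ) ^ (n - k)

/-!
Creative telescoping (Zeilberger's method): with `a n k` the summand of `b n`, the recurrence
operator applied to `n ↦ a n k` is the difference `G m k - G m (k - 1)` (just `G m 0` for `k = 0`)
of the certificate `G m k = -4 (4m + 7) (m + 3k + 2) (m + 3k + 3) a (m + 1) k`. Hence the sum over
`k ≤ m + 2` is `G m (m + 2)`, which vanishes because `a (m + 1) (m + 2) = 0`.
-/

open scoped Nat

/-- The binomial factor `C(2k,k)² C(4k,2k) C(n+3k,4k)` of the summand, which for `k ≤ n` is the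
multinomial coefficient `(n + 3k)! / (k!⁴ (n - k)!)`. -/
def summandCoeff (n k : ℕ) : ℕ :=
  (2 * k).choose k ^ 2 * (4 * k).choose (2 * k) * (n + 3 * k).choose (4 * k)

lemma summandCoeff_eq_zero_of_lt {n k : ℕ} (h : n < k) : summandCoeff n k = 0 := by
  rw [summandCoeff, Nat.choose_eq_zero_of_lt (by lia : n + 3 * k < 4 * k), mul_zero]

lemma factorial_pow_four_mul_summandCoeff (n k : ℕ) :
    k ! ^ 4 * summandCoeff n k = (n + 3 * k).descFactorial (4 * k) := by
  have choose_two : (2 * k).choose k * k ! * k ! = (2 * k)! := by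
    simpa only [two_mul] using Nat.add_choose_mul_factorial_mul_factorial k k
  have choose_four : (4 * k).choose (2 * k) * (2 * k)! * (2 * k)! = (4 * k)! := by
    simpa only [← add_mul] using Nat.add_choose_mul_factorial_mul_factorial (2 * k) (2 * k)
  rw [summandCoeff, Nat.descFactorial_eq_factorial_mul_choose, ← choose_four, ← choose_two]
  ring

lemma sub_mul_summandCoeff_succ_left (n k : ℕ) :
    (n + 1 - k) * summandCoeff (n + 1) k = (n + 3 * k + 1) * summandCoeff n k := by
  have choose_succ := Nat.choose_mul_succ_eq (n + 3 * k) (4 * k)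
  rw [show n + 3 * k + 1 - 4 * k = n + 1 - k by lia] at choose_succ
  rw [summandCoeff, summandCoeff, add_right_comm n 1]
  linear_combination (2 * k).choose k ^ 2 * (4 * k).choose (2 * k) * choose_succ.symm

lemma succ_pow_four_mul_summandCoeff_succ_succ (n k : ℕ) :
    (k + 1) ^ 4 * summandCoeff (n + 1) (k + 1) =
      (n + 3 * k + 4) * (n + 3 * k + 3) * (n + 3 * k + 2) * (n + 3 * k + 1) *
        summandCoeff n k := by
  refine Nat.eq_of_mul_eq_mul_left (pow_pos k.factorial_pos 4) ?_
  calc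
    k ! ^ 4 * ((k + 1) ^ 4 * summandCoeff (n + 1) (k + 1))
        = (k + 1)! ^ 4 * summandCoeff (n + 1) (k + 1) := by rw [Nat.factorial_succ]; ring
    _ = (n + 3 * k + 4).descFactorial (4 * k + 4) := by
        rw [factorial_pow_four_mul_summandCoeff]; congr 1; ring
    _ = (n + 3 * k + 4) * (n + 3 * k + 3) * (n + 3 * k + 2) * (n + 3 * k + 1) *
          (n + 3 * k).descFactorial (4 * k) := by
        simp only [Nat.succ_descFactorial_succ, mul_assoc]
    _ = _ := by rw [← factorial_pow_four_mul_summandCoeff]; ring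

section Summand

variable {R : Type*} [CommRing R] (x : R)

/-- The summand of `b n`, with `-27` replaced by an arbitrary ring element `x`. It is `0` for
`n < k`, where the exponent is truncated. -/
def summand (n k : ℕ) : R :=
  summandCoeff n k * x ^ (n - k)

lemma summand_eq_zero_of_lt {n k : ℕ} (h : n < k) : summand x n k = 0 := by
  rw [summand, summandCoeff_eq_zero_of_lt h, Nat.cast_zero, zero_mul]

lemma sub_mul_summand_succ_left (n k : ℕ) :
    ((n : R) + 1 - k) * summand x (n + 1) k = (n + 3 * k + 1) * x * summand x n k := by
  obtain hk | rfl | hk : k ≤ n ∨ k = n + 1 ∨ n + 1 < k := by lia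
  · have coeff_succ := congrArg (Nat.cast (R := R)) (sub_mul_summandCoeff_succ_left n k)
    rw [Nat.cast_mul, Nat.cast_sub (by lia)] at coeff_succ
    push_cast at coeff_succ
    rw [summand, summand, Nat.succ_sub hk, pow_succ]
    linear_combination x ^ (n - k) * x * coeff_succ
  · rw [summand_eq_zero_of_lt x n.lt_succ_self]
    push_cast
    ring
  · rw [summand_eq_zero_of_lt x hk, summand_eq_zero_of_lt x (by lia), mul_zero, mul_zero]

lemma succ_pow_four_mul_summand_succ_succ (n k : ℕ) :
    ((k : R) + 1) ^ 4 * summand x (n + 1) (k + 1) =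
      (n + 3 * k + 4) * (n + 3 * k + 3) * (n + 3 * k + 2) * (n + 3 * k + 1) * summand x n k := by
  have coeff_succ := congrArg (Nat.cast (R := R)) (succ_pow_four_mul_summandCoeff_succ_succ n k)
  push_cast at coeff_succ
  rw [summand, summand, Nat.add_sub_add_right]
  linear_combination x ^ (n - k) * coeff_succ

lemma mul_succ_pow_four_mul_summand_succ_right (n k : ℕ) :
    x * ((k : R) + 1) ^ 4 * summand x n (k + 1) =
      (n + 3 * k + 3) * (n + 3 * k + 2) * (n + 3 * k + 1) * (n - k) * summand x n k := by
  cases n with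
  | zero =>
    rw [summand_eq_zero_of_lt x k.succ_pos]
    rcases k.eq_zero_or_pos with rfl | hk
    · simp
    · rw [summand_eq_zero_of_lt x hk, mul_zero, mul_zero]
  | succ n =>
    push_cast
    linear_combination x * succ_pow_four_mul_summand_succ_succ x n k -
      (n + 3 * k + 4) * (n + 3 * k + 3) * (n + 3 * k + 2) * sub_mul_summand_succ_left x n k

end Summand

lemma b_eq_sum_range_summand {n N : ℕ} (h : n < N) :
    b n = ∑ k ∈ range N, summand (-27) n k := by
  calc
    b n = ∑ k ∈ range (n + 1), summand (-27) n k := by simp [b, summand, summandCoeff]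
    _ = _ := sum_subset (range_mono h) fun k _ hk =>
      summand_eq_zero_of_lt _ (by simpa using hk)

/-- The second-order recurrence operator annihilating `b`, evaluated on the sequence `u` at `m`. -/
def recurrenceOperator (u : ℕ → ℤ) (m : ℕ) : ℤ :=
  ((m : ℤ) + 2) ^ 3 * u (m + 2)
    + (2 * (m : ℤ) + 3) * (7 * (m : ℤ) ^ 2 + 21 * (m : ℤ) + 17) * u (m + 1)
    + 81 * ((m : ℤ) + 1) ^ 3 * u m

lemma recurrenceOperator_sum {ι : Type*} (s : Finset ι) (u : ℕ → ι → ℤ) (m : ℕ) :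
    recurrenceOperator (fun n => ∑ i ∈ s, u n i) m =
      ∑ i ∈ s, recurrenceOperator (fun n => u n i) m := by
  simp only [recurrenceOperator, sum_add_distrib, mul_sum]

/-- The certificate whose differences in `k` are the values of `recurrenceOperator` on the summands
of `b`. -/
def certificate (m k : ℕ) : ℤ :=
  -4 * (4 * m + 7) * (m + 3 * k + 2) * (m + 3 * k + 3) * summand (-27) (m + 1) k

lemma recurrenceOperator_summand_zero (m : ℕ) :
    recurrenceOperator (fun n => summand (-27) n 0) m = certificate m 0 := by
  simp only [recurrenceOperator, certificate, summand, summandCoeff, mul_zero, add_zero,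
    Nat.choose_zero_right, Nat.sub_zero, pow_succ]
  push_cast
  ring

lemma recurrenceOperator_summand_succ (m k : ℕ) :
    recurrenceOperator (fun n => summand (-27) n (k + 1)) m =
      certificate m (k + 1) - certificate m k := by
  have at_add_two := succ_pow_four_mul_summand_succ_succ (-27 : ℤ) (m + 1) k
  have at_add_one := mul_succ_pow_four_mul_summand_succ_right (-27 : ℤ) (m + 1) k
  have at_self : (-27) ^ 2 * ((k : ℤ) + 1) ^ 4 * summand (-27) m (k + 1) =
      (m + 3 * k + 3) * (m + 3 * k + 2) * (m - k) * (m + 1 - k) * summand (-27) (m + 1) k := by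
    linear_combination -27 * mul_succ_pow_four_mul_summand_succ_right (-27 : ℤ) m k -
      (m + 3 * k + 3) * (m + 3 * k + 2) * (m - k) * sub_mul_summand_succ_left (-27 : ℤ) m k
  -- This factor turns every term into a polynomial multiple of `summand (-27) (m + 1) k`.
  refine mul_left_cancel₀ (by positivity : (-27) ^ 2 * ((k : ℤ) + 1) ^ 4 ≠ 0) ?_
  simp only [recurrenceOperator, certificate]
  push_cast at at_add_two at_add_one ⊢
  linear_combination (-27) ^ 2 * ((m : ℤ) + 2) ^ 3 * at_add_two +
    (-27) * ((2 * m + 3) * (7 * m ^ 2 + 21 * m + 17) +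
      4 * (4 * m + 7) * (m + 3 * k + 5) * (m + 3 * k + 6)) * at_add_one +
    81 * ((m : ℤ) + 1) ^ 3 * at_self

lemma sum_range_succ_recurrenceOperator_summand (m K : ℕ) :
    ∑ k ∈ range (K + 1), recurrenceOperator (fun n => summand (-27) n k) m =
      certificate m K := by
  induction K with
  | zero => rw [sum_range_one, recurrenceOperator_summand_zero]
  | succ K ih => rw [sum_range_succ, ih, recurrenceOperator_summand_succ, add_sub_cancel]

lemma certificate_eq_zero_of_lt {m k : ℕ} (h : m + 1 < k) : certificate m k = 0 := by
  rw [certificate, summand_eq_zero_of_lt _ h, mul_zero]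

theorem stmt_17 (m : ℕ) :
    ((m : ℤ) + 2) ^ 3 * b (m + 2)
      + (2 * (m : ℤ) + 3) * (7 * (m : ℤ) ^ 2 + 21 * (m : ℤ) + 17) * b (m + 1)
      + 81 * ((m : ℤ) + 1) ^ 3 * b m = 0 := by
  calc
    _ = recurrenceOperator (fun n => ∑ k ∈ range (m + 3), summand (-27) n k) m := by
      rw [b_eq_sum_range_summand (by lia : m + 2 < m + 3),
        b_eq_sum_range_summand (by lia : m + 1 < m + 3),
        b_eq_sum_range_summand (by lia : m < m + 3), recurrenceOperator]
    _ = ∑ k ∈ range (m + 3), recurrenceOperator (fun n => summand (-27) n k) m :=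
      recurrenceOperator_sum _ _ m
    _ = certificate m (m + 2) := sum_range_succ_recurrenceOperator_summand m (m + 2)
    _ = 0 := certificate_eq_zero_of_lt (m + 1).lt_succ_self
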